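/- Define θ_0 = 1 and θ_n = Σ_{i=1}^n θ_{i−1} √(a_{i,n}) for n = 1, …, m. Then the virtual network S = Q_m ∘ U_m ∘ ⋯ ∘ Q_1 ∘ U_1 : H × H → H × H is Lipschitz with constant θ_m / 2^{m−1}. -/

import Mathlib

/-!
Write `dₙ` for the difference of the two trajectories after `n` layers. Firm nonexpansiveness of
`Qₙ` says that `2 dₙ - Uₙ dₙ₋₁` has norm at most `‖Uₙ dₙ₋₁‖`. Hence the rescaled differences
`Dₙ = 2ⁿ dₙ` satisfy `Dₙ = Uₙ Dₙ₋₁ + gₙ` with `‖gₙ‖ ≤ ‖Uₙ Dₙ₋₁‖`. Unrolling this recursion gives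
`Uₙ Dₙ₋₁ = ∑_{i < n} Uₙ ⋯ Uᵢ₊₁ gᵢ` with `g₀ = d₀`, and a strong induction yields
`‖Uₙ Dₙ₋₁‖ ≤ θₙ ‖d₀‖` as soon as `‖Uₙ ⋯ Uᵢ‖ ≤ √a_{i,n}` (`unrolled_bound`).
Since `Qₘ` is nonexpansive, the claim follows.

The operator bound (`norm_opComp_Uop_le`) is read off in the Hilbert basis: on the `p`-th coordinates
`Uₙ ⋯ Uᵢ` acts as the matrix `[[β, β̃], [0, η]]`, and the largest eigenvalue of its Gram matrix is
half the `p`-th term of the supremum defining `a_{i,n}` (`two_by_two_bound`).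
-/


noncomputable section

open Finset

variable {H : Type*} [NormedAddCommGroup H] [InnerProductSpace ℝ H]

/-- Build the pair `(x, b)` in the `ℓ²` product space `H × H`. -/
def mkP (x b : H) : WithLp 2 (H × H) := (WithLp.equiv 2 (H × H)).symm (x, b)

/-- First component of an element of the product space. -/
def fstP (z : WithLp 2 (H × H)) : H := (WithLp.equiv 2 (H × H) z).1

/-- Second component of an element of the product space. -/
def sndP (z : WithLp 2 (H × H)) : H := (WithLp.equiv 2 (H × H) z).2

/-- `(x, b) ↦ x` as a continuous linear map on the `ℓ²` product. -/
def fstL : WithLp 2 (H × H) →L[ℝ] H :=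
  (ContinuousLinearMap.fst ℝ H H).comp
    (WithLp.prodContinuousLinearEquiv 2 ℝ H H).toContinuousLinearMap

/-- `(x, b) ↦ b` as a continuous linear map on the `ℓ²` product. -/
def sndL : WithLp 2 (H × H) →L[ℝ] H :=
  (ContinuousLinearMap.snd ℝ H H).comp
    (WithLp.prodContinuousLinearEquiv 2 ℝ H H).toContinuousLinearMap

/-- `Uₙ(x, b) = (Wₙ x + λₙ b, ηₙ b)` as a continuous linear map on the product space. -/
def Uop (W : ℕ → H →L[ℝ] H) (lam eta : ℕ → ℝ) (n : ℕ) :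
    WithLp 2 (H × H) →L[ℝ] WithLp 2 (H × H) :=
  ((WithLp.prodContinuousLinearEquiv 2 ℝ H H).symm.toContinuousLinearMap).comp
    (((((W n).comp (ContinuousLinearMap.fst ℝ H H)) + lam n • (ContinuousLinearMap.snd ℝ H H)).prod
        (eta n • (ContinuousLinearMap.snd ℝ H H))).comp
      (WithLp.prodContinuousLinearEquiv 2 ℝ H H).toContinuousLinearMap)

/-- Composition `Aₙ ∘ ⋯ ∘ Aᵢ` (the identity when `n < i`, i.e. when the composition is empty). -/
def opComp {E : Type*} [NormedAddCommGroup E] [NormedSpace ℝ E]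
    (A : ℕ → E →L[ℝ] E) (i : ℕ) : ℕ → (E →L[ℝ] E)
  | 0 => 1
  | n + 1 => if n + 1 < i then 1 else (A (n + 1)).comp (opComp A i n)

/-- `η_{i,j} = η_j ⋯ η_i` if `j ≥ i`, and `1` otherwise. -/
def etaP (eta : ℕ → ℝ) (i j : ℕ) : ℝ := ∏ k ∈ Finset.Icc i j, eta k

/-- `β_{i,n,p} = ∏_{j=i}^n β_p^{(j)}`. -/
def betaC (beta : ℕ → ℕ → ℝ) (i n p : ℕ) : ℝ := ∏ j ∈ Finset.Icc i n, beta j p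

/-- `β̃_{i,n,p} = Σ_{j=i}^{n−1} (∏_{l=j+1}^n β_p^{(l)}) λ_j η_{i,j−1} + λ_n η_{i,n−1}`. -/
def betaT (beta : ℕ → ℕ → ℝ) (lam eta : ℕ → ℝ) (i n p : ℕ) : ℝ :=
  (∑ j ∈ Finset.Icc i (n - 1), (∏ l ∈ Finset.Icc (j + 1) n, beta l p) * lam j * etaP eta i (j - 1))
    + lam n * etaP eta i (n - 1)

/-- The operator `W̃_{i,n} = Σ_{j=i}^{n−1} λ_j η_{i,j−1} (Wₙ ∘ ⋯ ∘ W_{j+1}) + λ_n η_{i,n−1} Id`. -/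
def Wt (W : ℕ → H →L[ℝ] H) (lam eta : ℕ → ℝ) (i n : ℕ) : H →L[ℝ] H :=
  (∑ j ∈ Finset.Icc i (n - 1), (lam j * etaP eta i (j - 1)) • opComp W (j + 1) n)
    + (lam n * etaP eta i (n - 1)) • (1 : H →L[ℝ] H)

/-- `a_{i,n}`. -/
def aC (beta : ℕ → ℕ → ℝ) (lam eta : ℕ → ℝ) (i n : ℕ) : ℝ :=
  (1 / 2) * ⨆ p : ℕ,
    (betaC beta i n p ^ 2 + betaT beta lam eta i n p ^ 2 + etaP eta i n ^ 2
      + Real.sqrt ((betaC beta i n p ^ 2 + betaT beta lam eta i n p ^ 2 + etaP eta i n ^ 2) ^ 2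
          - 4 * betaC beta i n p ^ 2 * etaP eta i n ^ 2))

/-- `ā_{i,n} = sup_p (β_{i,n,p}² + β̃_{i,n,p}²)`. -/
def aBar (beta : ℕ → ℕ → ℝ) (lam eta : ℕ → ℝ) (i n : ℕ) : ℝ :=
  ⨆ p : ℕ, (betaC beta i n p ^ 2 + betaT beta lam eta i n p ^ 2)

/-- `Qₙ(x, b) = (Rₙ x, b)`. -/
def Qop (R : ℕ → H → H) (n : ℕ) (z : WithLp 2 (H × H)) : WithLp 2 (H × H) :=
  mkP (R n (fstP z)) (sndP z)

/-- The virtual network `Qₙ ∘ Uₙ ∘ ⋯ ∘ Q₁ ∘ U₁`. -/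
def net (U : ℕ → WithLp 2 (H × H) →L[ℝ] WithLp 2 (H × H))
    (Q : ℕ → WithLp 2 (H × H) → WithLp 2 (H × H)) :
    ℕ → (WithLp 2 (H × H) → WithLp 2 (H × H))
  | 0 => id
  | n + 1 => fun z => Q (n + 1) (U (n + 1) (net U Q n z))

/-- `Ū_m (x, b) = W_m x + λ_m b` as a continuous linear map to `H`. -/
def Ubar (W : ℕ → H →L[ℝ] H) (lam : ℕ → ℝ) (m : ℕ) : WithLp 2 (H × H) →L[ℝ] H :=
  ((W m).comp fstL) + lam m • sndL

/-- `Û₁ b = (λ₁ b, η₁ b)`. -/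
def Uhat1a (lam eta : ℕ → ℝ) : H →L[ℝ] WithLp 2 (H × H) :=
  ((WithLp.prodContinuousLinearEquiv 2 ℝ H H).symm.toContinuousLinearMap).comp
    ((lam 1 • (1 : H →L[ℝ] H)).prod (eta 1 • (1 : H →L[ℝ] H)))

/-- `Û₁ b = (W₁ b + λ₁ b, η₁ b)`. -/
def Uhat1b (W : ℕ → H →L[ℝ] H) (lam eta : ℕ → ℝ) : H →L[ℝ] WithLp 2 (H × H) :=
  ((WithLp.prodContinuousLinearEquiv 2 ℝ H H).symm.toContinuousLinearMap).comp
    ((W 1 + lam 1 • (1 : H →L[ℝ] H)).prod (eta 1 • (1 : H →L[ℝ] H)))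

/-- The chain `Qₙ ∘ Uₙ ∘ ⋯ ∘ Q₂ ∘ U₂ ∘ Q₁ ∘ Û₁` (for `n ≥ 1`), fed with an input in `H`. -/
def midNet (U : ℕ → WithLp 2 (H × H) →L[ℝ] WithLp 2 (H × H))
    (Q : ℕ → WithLp 2 (H × H) → WithLp 2 (H × H)) (U1 : H → WithLp 2 (H × H)) :
    ℕ → (H → WithLp 2 (H × H))
  | 0 => U1
  | 1 => fun b => Q 1 (U1 b)
  | n + 2 => fun b => Q (n + 2) (U (n + 2) (midNet U Q U1 (n + 1) b))

/-! ### Affine recursions with controlled defect -/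

section Recursion

variable {E : Type*} [NormedAddCommGroup E] [NormedSpace ℝ E]

lemma opComp_succ (A : ℕ → E →L[ℝ] E) {i n : ℕ} (h : i ≤ n + 1) :
    opComp A i (n + 1) = (A (n + 1)).comp (opComp A i n) := by
  simp [opComp, Nat.not_lt.mpr h]

lemma opComp_of_lt (A : ℕ → E →L[ℝ] E) {i n : ℕ} (h : n < i) : opComp A i n = 1 := by
  cases n with
  | zero => rfl
  | succ n => simp [opComp, h]

/-- Solution of the affine recursion `Dₙ₊₁ = Aₙ₊₁ Dₙ + gₙ₊₁`, where `gₙ₊₁` is by definition the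
defect and `g₀ = D₀`. -/
lemma unrolled_eq (A : ℕ → E →L[ℝ] E) (D g : ℕ → E) (h0 : g 0 = D 0)
    (hg : ∀ n, g (n + 1) = D (n + 1) - A (n + 1) (D n)) (n : ℕ) :
    D n = ∑ i ∈ Finset.range (n + 1), opComp A (i + 1) n (g i) := by
  induction n with
  | zero => simp [opComp, h0]
  | succ n ih =>
    have h : ∑ i ∈ Finset.range (n + 1), opComp A (i + 1) (n + 1) (g i) = A (n + 1) (D n) := by
      rw [ih, map_sum]
      refine Finset.sum_congr rfl fun i hi => ?_
      rw [Finset.mem_range] at hi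
      rw [opComp_succ A (by omega)]
      rfl
    rw [Finset.sum_range_succ, h, opComp_of_lt A (Nat.lt_succ_self _), hg]
    simp

/-- If each defect `D_n - A_n D_{n-1}` is at most `‖A_n D_{n-1}‖`, then the recursion defining `θ`
controls `‖A_n D_{n-1}‖`. -/
lemma unrolled_bound (m : ℕ) (A : ℕ → E →L[ℝ] E) (D : ℕ → E) (c : ℕ → ℕ → ℝ) (θ : ℕ → ℝ)
    (hc : ∀ i n, 1 ≤ i → i ≤ n → n ≤ m → 0 ≤ c i n ∧ ∀ z, ‖opComp A i n z‖ ≤ c i n * ‖z‖)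
    (hD : ∀ n, n + 1 ≤ m → ‖D (n + 1) - A (n + 1) (D n)‖ ≤ ‖A (n + 1) (D n)‖)
    (hθ0 : θ 0 = 1)
    (hθ : ∀ n, 1 ≤ n → n ≤ m → θ n = ∑ i ∈ Finset.Icc 1 n, θ (i - 1) * c i n)
    (n : ℕ) (hn : n + 1 ≤ m) :
    ‖A (n + 1) (D n)‖ ≤ θ (n + 1) * ‖D 0‖ := by
  let g : ℕ → E := fun n => Nat.casesOn n (D 0) fun k => D (k + 1) - A (k + 1) (D k)
  induction n using Nat.strong_induction_on with
  | _ n ih =>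
    have hgb : ∀ i, i ≤ n → ‖g i‖ ≤ θ i * ‖D 0‖ := by
      intro i hi
      cases i with
      | zero => simp [g, hθ0]
      | succ k => exact (hD k (by omega)).trans (ih k (by omega) (by omega))
    have hsum : A (n + 1) (D n) = ∑ i ∈ Finset.range (n + 1), opComp A (i + 1) (n + 1) (g i) := by
      conv_lhs => rw [unrolled_eq A D g rfl (fun _ => rfl) n, map_sum]
      refine Finset.sum_congr rfl fun i hi => ?_
      rw [Finset.mem_range] at hi
      rw [opComp_succ A (by omega)]
      rfl
    have hθ' : θ (n + 1) = ∑ i ∈ Finset.range (n + 1), θ i * c (i + 1) (n + 1) := by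
      rw [hθ (n + 1) (by omega) hn, Finset.range_eq_Ico]
      exact (Finset.sum_Ico_add' (fun i => θ (i - 1) * c i (n + 1)) 0 (n + 1) 1).symm
    rw [hsum, hθ', Finset.sum_mul]
    refine (norm_sum_le _ _).trans (Finset.sum_le_sum fun i hi => ?_)
    rw [Finset.mem_range] at hi
    obtain ⟨h0, h1⟩ := hc (i + 1) (n + 1) (by omega) (by omega) hn
    calc _ ≤ c (i + 1) (n + 1) * ‖g i‖ := h1 _
      _ ≤ c (i + 1) (n + 1) * (θ i * ‖D 0‖) :=
        mul_le_mul_of_nonneg_left (hgb i (by omega)) h0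
      _ = _ := by ring

end Recursion

/-! ### The norm of `Uₙ ⋯ Uᵢ` -/

/-- The squared norm of `[[s, t], [0, e]] (x, b)` is at most the largest eigenvalue of the Gram
matrix times `x² + b²`. -/
lemma two_by_two_bound (s t e x b : ℝ) :
    (s * x + t * b) ^ 2 + (e * b) ^ 2 ≤
      (1 / 2) * (s ^ 2 + t ^ 2 + e ^ 2
        + Real.sqrt ((s ^ 2 + t ^ 2 + e ^ 2) ^ 2 - 4 * s ^ 2 * e ^ 2)) * (x ^ 2 + b ^ 2) := by
  set r := Real.sqrt ((s ^ 2 + t ^ 2 + e ^ 2) ^ 2 - 4 * s ^ 2 * e ^ 2) with hr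
  have hdisc : (s ^ 2 + t ^ 2 + e ^ 2) ^ 2 - 4 * s ^ 2 * e ^ 2
      = (s ^ 2 - (t ^ 2 + e ^ 2)) ^ 2 + (2 * s * t) ^ 2 := by ring
  have hsq : r ^ 2 = (s ^ 2 - (t ^ 2 + e ^ 2)) ^ 2 + (2 * s * t) ^ 2 := by
    rw [hr, hdisc, Real.sq_sqrt (by positivity)]
  have habs : |s ^ 2 - (t ^ 2 + e ^ 2)| ≤ r := by
    rw [hr, hdisc]
    exact Real.abs_le_sqrt (by nlinarith [sq_nonneg (2 * s * t)])
  obtain ⟨h1, h2⟩ := abs_le.mp habs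
  -- With `2P = r - s² + (t² + e²)` and `2Q = r + s² - (t² + e²)`, the claim is that the form
  -- `P x² - 2 s t x b + Q b²` is nonnegative, where `P, Q ≥ 0` and `P Q = (s t)²`.
  obtain ⟨P, hP⟩ : ∃ P, P = (r - s ^ 2 + (t ^ 2 + e ^ 2)) / 2 := ⟨_, rfl⟩
  obtain ⟨Q, hQ⟩ : ∃ Q, Q = (r + s ^ 2 - (t ^ 2 + e ^ 2)) / 2 := ⟨_, rfl⟩
  have hP0 : 0 ≤ P := by rw [hP]; linarith
  have hQ0 : 0 ≤ Q := by rw [hQ]; linarith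
  have hPQ : P * Q = (s * t) ^ 2 := by rw [hP, hQ]; nlinarith
  have key : 0 ≤ P * x ^ 2 - 2 * (s * t) * (x * b) + Q * b ^ 2 := by
    have hst : |s * t| = √P * √Q := by
      rw [← Real.sqrt_mul hP0, hPQ, Real.sqrt_sq_eq_abs]
    have h3 : (s * t) * (x * b) ≤ (√P * √Q) * (|x| * |b|) := by
      rw [← hst, ← abs_mul, ← abs_mul]; exact le_abs_self _
    have h4 := sq_nonneg (√P * |x| - √Q * |b|)
    have h5 : (√P * |x| - √Q * |b|) ^ 2
        = P * x ^ 2 - 2 * ((√P * √Q) * (|x| * |b|)) + Q * b ^ 2 := by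
      rw [sub_sq, mul_pow, mul_pow, Real.sq_sqrt hP0, Real.sq_sqrt hQ0, sq_abs, sq_abs]; ring
    linarith
  subst hP hQ
  nlinarith [key]

lemma betaT_self (beta : ℕ → ℕ → ℝ) (lam eta : ℕ → ℝ) {i : ℕ} (hi : 1 ≤ i) (p : ℕ) :
    betaT beta lam eta i i p = lam i := by
  have h : Finset.Icc i (i - 1) = ∅ := Finset.Icc_eq_empty (by omega)
  simp [betaT, etaP, h]

lemma betaT_succ (beta : ℕ → ℕ → ℝ) (lam eta : ℕ → ℝ) {i n : ℕ} (hi : 1 ≤ i) (hin : i ≤ n)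
    (p : ℕ) :
    betaT beta lam eta i (n + 1) p
      = beta (n + 1) p * betaT beta lam eta i n p + lam (n + 1) * etaP eta i n := by
  obtain ⟨k, rfl⟩ : ∃ k, n = k + 1 := ⟨n - 1, by omega⟩
  simp only [betaT, Nat.add_sub_cancel]
  rw [Finset.sum_Icc_succ_top hin, mul_add, Finset.mul_sum, Finset.Icc_self, Finset.prod_singleton]
  congr 1
  congr 1
  · refine Finset.sum_congr rfl fun j hj => ?_
    rw [Finset.mem_Icc] at hj
    rw [Finset.prod_Icc_succ_top (b := k + 1) (by omega)]
    ring
  · simp only [Nat.add_sub_cancel]; ring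

lemma inner_basis_apply (v : HilbertBasis ℕ ℝ H) (T : H →L[ℝ] H) (μ : ℕ → ℝ)
    (hT : ∀ p, T (v p) = μ p • v p) (p : ℕ) (x : H) :
    inner ℝ (v p) (T x) = μ p * inner ℝ (v p) x := by
  have h1 := ((v.hasSum_repr x).mapL T).mapL (innerSL ℝ (v p))
  have h2 : HasSum (fun q => innerSL ℝ (v p) (T (v.repr x q • v q))) (μ p * inner ℝ (v p) x) := by
    convert hasSum_single p ?_ using 1
    · simp [hT, v.repr_apply_apply, v.orthonormal.1, mul_comm]
    · intro q hq
      simp [hT, v.orthonormal.2 hq.symm]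
  exact h1.unique h2

lemma abs_eigenvalue_le (v : HilbertBasis ℕ ℝ H) (T : H →L[ℝ] H) (μ : ℕ → ℝ)
    (hT : ∀ p, T (v p) = μ p • v p) (p : ℕ) : |μ p| ≤ ‖T‖ := by
  have h := T.le_opNorm (v p)
  rwa [hT, norm_smul, v.orthonormal.1, mul_one, mul_one, Real.norm_eq_abs] at h

lemma Uop_fst (W : ℕ → H →L[ℝ] H) (lam eta : ℕ → ℝ) (n : ℕ) (z : WithLp 2 (H × H)) :
    (Uop W lam eta n z).fst = W n z.fst + lam n • z.snd := rfl

lemma Uop_snd (W : ℕ → H →L[ℝ] H) (lam eta : ℕ → ℝ) (n : ℕ) (z : WithLp 2 (H × H)) :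
    (Uop W lam eta n z).snd = eta n • z.snd := rfl

/-- In the `p`-th coordinates, `Uₙ ⋯ Uᵢ` is the matrix `[[β, β̃], [0, η]]`. -/
lemma opComp_Uop_coord (m : ℕ) (v : HilbertBasis ℕ ℝ H)
    (W : ℕ → H →L[ℝ] H) (beta : ℕ → ℕ → ℝ) (lam eta : ℕ → ℝ)
    (hW : ∀ n, 1 ≤ n → n ≤ m → ∀ p : ℕ, W n (v p) = beta n p • v p)
    {i : ℕ} (hi : 1 ≤ i) (z : WithLp 2 (H × H)) {n : ℕ} (hin : i ≤ n) (hn : n ≤ m) :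
    (∀ p, inner ℝ (v p) (opComp (Uop W lam eta) i n z).fst
      = betaC beta i n p * inner ℝ (v p) z.fst
        + betaT beta lam eta i n p * inner ℝ (v p) z.snd) ∧
    (opComp (Uop W lam eta) i n z).snd = etaP eta i n • z.snd := by
  induction n, hin using Nat.le_induction with
  | base =>
    obtain ⟨k, rfl⟩ : ∃ k, i = k + 1 := ⟨i - 1, by omega⟩
    rw [opComp_succ _ le_rfl, opComp_of_lt _ (Nat.lt_succ_self k)]
    refine ⟨fun p => ?_, ?_⟩
    · rw [betaT_self _ _ _ hi]
      simp [Uop_fst, inner_add_right, inner_smul_right, betaC,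
        inner_basis_apply v (W (k + 1)) _ (hW _ hi hn)]
    · simp [Uop_snd, etaP]
  | succ n hin ih =>
    obtain ⟨ih1, ih2⟩ := ih (by omega)
    rw [opComp_succ _ (by omega)]
    refine ⟨fun p => ?_, ?_⟩
    · rw [ContinuousLinearMap.comp_apply, Uop_fst, inner_add_right, inner_smul_right,
        inner_basis_apply v (W (n + 1)) _ (hW _ (by omega) hn), ih1, ih2, inner_smul_right,
        betaT_succ _ _ _ hi hin, betaC, betaC, Finset.prod_Icc_succ_top (by omega)]
      ring
    · rw [ContinuousLinearMap.comp_apply, Uop_snd, ih2, smul_smul, etaP, etaP,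
        Finset.prod_Icc_succ_top (by omega), mul_comm]

lemma hasSum_sq_coord (v : HilbertBasis ℕ ℝ H) (x : H) :
    HasSum (fun p => (inner ℝ (v p) x) ^ 2) (‖x‖ ^ 2) := by
  have h := v.hasSum_inner_mul_inner x x
  rw [real_inner_self_eq_norm_sq] at h
  have e : (fun p => (inner ℝ (v p) x) ^ 2) = fun p => inner ℝ x (v p) * inner ℝ (v p) x := by
    funext p
    rw [sq, real_inner_comm (v p) x]
  rw [e]
  exact h

/-- The supremum in `a_{i,n}` is over a bounded family, since `|β_p^{(n)}| ≤ ‖Wₙ‖`. -/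
lemma bddAbove_aC (m : ℕ) (v : HilbertBasis ℕ ℝ H)
    (W : ℕ → H →L[ℝ] H) (beta : ℕ → ℕ → ℝ) (lam eta : ℕ → ℝ)
    (hW : ∀ n, 1 ≤ n → n ≤ m → ∀ p : ℕ, W n (v p) = beta n p • v p)
    {i n : ℕ} (hi : 1 ≤ i) (hin : i ≤ n) (hn : n ≤ m) :
    BddAbove (Set.range fun p : ℕ =>
      (betaC beta i n p ^ 2 + betaT beta lam eta i n p ^ 2 + etaP eta i n ^ 2
      + Real.sqrt ((betaC beta i n p ^ 2 + betaT beta lam eta i n p ^ 2 + etaP eta i n ^ 2) ^ 2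
          - 4 * betaC beta i n p ^ 2 * etaP eta i n ^ 2))) := by
  have hT : ∃ C, ∀ p, |betaT beta lam eta i n p| ≤ C := by
    induction n, hin using Nat.le_induction with
    | base => exact ⟨|lam i|, fun p => by rw [betaT_self _ _ _ hi]⟩
    | succ n hin ih =>
      obtain ⟨C, hC⟩ := ih (by omega)
      refine ⟨‖W (n + 1)‖ * C + |lam (n + 1) * etaP eta i n|, fun p => ?_⟩
      rw [betaT_succ _ _ _ hi hin]
      refine (abs_add_le _ _).trans (add_le_add ?_ le_rfl)
      rw [abs_mul]
      exact mul_le_mul (abs_eigenvalue_le v _ _ (hW _ (by omega) hn) p) (hC p) (abs_nonneg _)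
        (norm_nonneg _)
  have hC : ∃ C, ∀ p, |betaC beta i n p| ≤ C := by
    refine ⟨∏ j ∈ Finset.Icc i n, ‖W j‖, fun p => ?_⟩
    rw [betaC, Finset.abs_prod]
    refine Finset.prod_le_prod (fun _ _ => abs_nonneg _) fun j hj => ?_
    rw [Finset.mem_Icc] at hj
    exact abs_eigenvalue_le v _ _ (hW j (by omega) (by omega)) p
  obtain ⟨C, hC⟩ := hC
  obtain ⟨C', hC'⟩ := hT
  refine ⟨2 * (C ^ 2 + C' ^ 2 + etaP eta i n ^ 2), ?_⟩
  rintro _ ⟨p, rfl⟩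
  have h1 : betaC beta i n p ^ 2 ≤ C ^ 2 := sq_le_sq' (abs_le.mp (hC p)).1 (abs_le.mp (hC p)).2
  have h2 : betaT beta lam eta i n p ^ 2 ≤ C' ^ 2 :=
    sq_le_sq' (abs_le.mp (hC' p)).1 (abs_le.mp (hC' p)).2
  have h3 : Real.sqrt ((betaC beta i n p ^ 2 + betaT beta lam eta i n p ^ 2 + etaP eta i n ^ 2) ^ 2
          - 4 * betaC beta i n p ^ 2 * etaP eta i n ^ 2)
      ≤ betaC beta i n p ^ 2 + betaT beta lam eta i n p ^ 2 + etaP eta i n ^ 2 := by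
    refine Real.sqrt_le_iff.mpr ⟨by positivity, ?_⟩
    have : 0 ≤ 4 * betaC beta i n p ^ 2 * etaP eta i n ^ 2 := by positivity
    linarith
  dsimp only
  linarith

lemma norm_opComp_Uop_le (m : ℕ) (v : HilbertBasis ℕ ℝ H)
    (W : ℕ → H →L[ℝ] H) (beta : ℕ → ℕ → ℝ) (lam eta : ℕ → ℝ)
    (hW : ∀ n, 1 ≤ n → n ≤ m → ∀ p : ℕ, W n (v p) = beta n p • v p)
    {i n : ℕ} (hi : 1 ≤ i) (hin : i ≤ n) (hn : n ≤ m) (z : WithLp 2 (H × H)) :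
    ‖opComp (Uop W lam eta) i n z‖ ≤ √(aC beta lam eta i n) * ‖z‖ := by
  obtain ⟨h1, h2⟩ := opComp_Uop_coord m v W beta lam eta hW hi z hin hn
  have hbdd := bddAbove_aC m v W beta lam eta hW hi hin hn
  set y := opComp (Uop W lam eta) i n z
  have hle : ‖y‖ ^ 2 ≤ aC beta lam eta i n * ‖z‖ ^ 2 := by
    rw [WithLp.prod_norm_sq_eq_of_L2, WithLp.prod_norm_sq_eq_of_L2]
    refine hasSum_le (fun p => ?_)
      ((hasSum_sq_coord v y.fst).add (hasSum_sq_coord v y.snd))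
      (((hasSum_sq_coord v z.fst).add (hasSum_sq_coord v z.snd)).mul_left _)
    rw [h1, h2, inner_smul_right]
    refine (two_by_two_bound _ _ _ _ _).trans ?_
    refine mul_le_mul_of_nonneg_right ?_ (by positivity)
    exact mul_le_mul_of_nonneg_left (le_ciSup hbdd p) (by norm_num)
  calc ‖y‖ ≤ √(aC beta lam eta i n * ‖z‖ ^ 2) := Real.le_sqrt_of_sq_le hle
    _ = _ := by rw [Real.sqrt_mul' _ (sq_nonneg _), Real.sqrt_sq (norm_nonneg _)]

/-! ### Firm nonexpansiveness and the Lipschitz bound -/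

/-- Firm nonexpansiveness of `R` passes to `Q`. -/
lemma Qop_firm (R : ℕ → H → H) (n : ℕ)
    (hR : ∀ x y : H,
      ‖R n x - R n y‖ ^ 2 + ‖(x - R n x) - (y - R n y)‖ ^ 2 ≤ ‖x - y‖ ^ 2)
    (z z' : WithLp 2 (H × H)) :
    ‖Qop R n z - Qop R n z'‖ ^ 2 + ‖(z - z') - (Qop R n z - Qop R n z')‖ ^ 2 ≤ ‖z - z'‖ ^ 2 := by
  have h := hR z.fst z'.fst
  have e1 : (Qop R n z).fst = R n z.fst := rfl
  have e2 : (Qop R n z).snd = z.snd := rfl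
  have e1' : (Qop R n z').fst = R n z'.fst := rfl
  have e2' : (Qop R n z').snd = z'.snd := rfl
  simp only [WithLp.prod_norm_sq_eq_of_L2, WithLp.sub_fst, WithLp.sub_snd, e1, e2, e1', e2',
    sub_self, norm_zero]
  rw [sub_sub_sub_comm] at h
  linarith

/-- The reflection `2Q - Id` of a firmly nonexpansive map is nonexpansive, in terms of
differences `q` of outputs and `y` of inputs. -/
lemma reflection_le {E : Type*} [NormedAddCommGroup E] [InnerProductSpace ℝ E] {q y : E}
    (h : ‖q‖ ^ 2 + ‖y - q‖ ^ 2 ≤ ‖y‖ ^ 2) : ‖(2 : ℝ) • q - y‖ ≤ ‖y‖ := by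
  have hp := parallelogram_law_with_norm ℝ q (y - q)
  have e1 : q + (y - q) = y := by abel
  have e2 : q - (y - q) = (2 : ℝ) • q - y := by rw [two_smul]; abel
  rw [e1, e2] at hp
  exact le_of_sq_le_sq (by nlinarith) (norm_nonneg _)

theorem statement5 (m : ℕ) (hm : 1 ≤ m) [CompleteSpace H]
    (v : HilbertBasis ℕ ℝ H)
    (W : ℕ → H →L[ℝ] H) (beta : ℕ → ℕ → ℝ) (lam eta : ℕ → ℝ)
    (hW : ∀ n, 1 ≤ n → n ≤ m → ∀ p : ℕ, W n (v p) = beta n p • v p)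
    (hlam : ∀ n, 1 ≤ n → n ≤ m → 0 < lam n)
    (heta : ∀ n, 1 ≤ n → n ≤ m → 0 < eta n)
    (R : ℕ → H → H)
    (hR : ∀ n, 1 ≤ n → n ≤ m → ∀ x y : H,
      ‖R n x - R n y‖ ^ 2 + ‖(x - R n x) - (y - R n y)‖ ^ 2 ≤ ‖x - y‖ ^ 2)
    (θ : ℕ → ℝ) (hθ0 : θ 0 = 1)
    (hθ : ∀ n, 1 ≤ n → n ≤ m →
      θ n = ∑ i ∈ Finset.Icc 1 n, θ (i - 1) * Real.sqrt (aC beta lam eta i n)) :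
    ∀ z z' : WithLp 2 (H × H),
      ‖net (Uop W lam eta) (Qop R) m z - net (Uop W lam eta) (Qop R) m z'‖
        ≤ θ m / 2 ^ (m - 1) * ‖z - z'‖ := by
  intro z z'
  set U := Uop W lam eta with hU
  let d : ℕ → WithLp 2 (H × H) := fun n => net U (Qop R) n z - net U (Qop R) n z'
  have hfirm : ∀ n, n + 1 ≤ m →
      ‖d (n + 1)‖ ^ 2 + ‖U (n + 1) (d n) - d (n + 1)‖ ^ 2 ≤ ‖U (n + 1) (d n)‖ ^ 2 := by
    intro n hn
    have h := Qop_firm R (n + 1) (hR (n + 1) (by omega) hn)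
      (U (n + 1) (net U (Qop R) n z)) (U (n + 1) (net U (Qop R) n z'))
    rw [← map_sub] at h
    exact h
  have hbound := unrolled_bound m U (fun n => (2 : ℝ) ^ n • d n)
    (fun i n => √(aC beta lam eta i n)) θ
    (fun i n hi hin hn => ⟨Real.sqrt_nonneg _,
      norm_opComp_Uop_le m v W beta lam eta hW hi hin hn⟩)
    (by
      intro n hn
      have e : (2 : ℝ) ^ (n + 1) • d (n + 1) - U (n + 1) ((2 : ℝ) ^ n • d n)
          = (2 : ℝ) ^ n • ((2 : ℝ) • d (n + 1) - U (n + 1) (d n)) := by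
        rw [map_smul, smul_sub ((2 : ℝ) ^ n), smul_smul, pow_succ]
      rw [e, map_smul, norm_smul, norm_smul]
      exact mul_le_mul_of_nonneg_left (reflection_le (hfirm n hn)) (norm_nonneg _))
    hθ0 hθ
  obtain ⟨k, rfl⟩ : ∃ k, m = k + 1 := ⟨m - 1, by omega⟩
  have hk := hbound k le_rfl
  have hd0 : d 0 = z - z' := rfl
  simp only [map_smul, norm_smul, norm_pow, Real.norm_ofNat, pow_zero, one_smul, hd0] at hk
  have hlast : ‖d (k + 1)‖ ≤ ‖U (k + 1) (d k)‖ :=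
    le_of_sq_le_sq (by nlinarith [hfirm k le_rfl, sq_nonneg ‖U (k + 1) (d k) - d (k + 1)‖])
      (norm_nonneg _)
  refine hlast.trans ?_
  rw [Nat.add_sub_cancel, div_mul_eq_mul_div, le_div_iff₀ (by positivity), mul_comm]
  exact hk
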